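/- Let 𝒜 be a weakly idempotent complete exact category and let 𝒳,𝒴 be full additive subcategories of 𝒜 closed under isomorphisms and direct summands, with ω = 𝒳∩𝒴. If (CoFib_ω, Fib_ω, Weq_ω) is a closed model structure on 𝒜, then (𝒳,𝒴) is a hereditary complete cotorsion pair in 𝒜 and ω is contravariantly finite in 𝒜; moreover for this model structure the class of cofibrant objects is 𝒳, every object is fibrant, and the class of trivial objects is 𝒴. -/

import Mathlib

open CategoryTheory Limits ZeroObject

universe v u

/-- An exact structure (Quillen exact category) on an additive category `𝒜`:
a class of conflations (kernel-cokernel pairs), closed under isomorphisms,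
with identities deflations, deflations closed under composition and stable
under pullback, and inflations stable under pushout. -/
structure ExactStructure (𝒜 : Type u) [Category.{v} 𝒜] [Preadditive 𝒜]
    [HasZeroObject 𝒜] [HasBinaryBiproducts 𝒜] : Type (max u v) where
  conflation : ∀ ⦃X Y Z : 𝒜⦄, (X ⟶ Y) → (Y ⟶ Z) → Prop
  comp_zero : ∀ {X Y Z : 𝒜} {i : X ⟶ Y} {d : Y ⟶ Z}, conflation i d → i ≫ d = 0
  isKernel : ∀ {X Y Z : 𝒜} {i : X ⟶ Y} {d : Y ⟶ Z} (h : conflation i d),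
    Nonempty (IsLimit (KernelFork.ofι i (comp_zero h)))
  isCokernel : ∀ {X Y Z : 𝒜} {i : X ⟶ Y} {d : Y ⟶ Z} (h : conflation i d),
    Nonempty (IsColimit (CokernelCofork.ofπ d (comp_zero h)))
  conflation_iso : ∀ {X Y Z X' Y' Z' : 𝒜} {i : X ⟶ Y} {d : Y ⟶ Z}
    (eX : X ≅ X') (eY : Y ≅ Y') (eZ : Z ≅ Z') {i' : X' ⟶ Y'} {d' : Y' ⟶ Z'},
    conflation i d → i ≫ eY.hom = eX.hom ≫ i' → d ≫ eZ.hom = eY.hom ≫ d' →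
    conflation i' d'
  id_deflation : ∀ X : 𝒜, conflation (0 : (0 : 𝒜) ⟶ X) (𝟙 X)
  deflation_comp : ∀ {X Y Z X' W : 𝒜} {i : X ⟶ Y} {d : Y ⟶ Z} {i' : X' ⟶ Z} {d' : Z ⟶ W},
    conflation i d → conflation i' d' → ∃ (K : 𝒜) (k : K ⟶ Y), conflation k (d ≫ d')
  pullback_deflation : ∀ {X Y Z Z' : 𝒜} {i : X ⟶ Y} {d : Y ⟶ Z},
    conflation i d → ∀ (f : Z' ⟶ Z),
    ∃ (Y' : 𝒜) (f' : Y' ⟶ Y) (d' : Y' ⟶ Z') (K : 𝒜) (k : K ⟶ Y'),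
      IsPullback f' d' d f ∧ conflation k d'
  pushout_inflation : ∀ {X Y Z X' : 𝒜} {i : X ⟶ Y} {d : Y ⟶ Z},
    conflation i d → ∀ (f : X ⟶ X'),
    ∃ (Y' : 𝒜) (f' : Y ⟶ Y') (i' : X' ⟶ Y') (Q : 𝒜) (q : Y' ⟶ Q),
      IsPushout i f f' i' ∧ conflation i' q

variable {𝒜 : Type u} [Category.{v} 𝒜] [Preadditive 𝒜] [HasZeroObject 𝒜]
  [HasBinaryBiproducts 𝒜]

/-- `f` is an inflation: the first map of some conflation. -/
def IsInflation (E : ExactStructure 𝒜) {X Y : 𝒜} (i : X ⟶ Y) : Prop :=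
  ∃ (Z : 𝒜) (d : Y ⟶ Z), E.conflation i d

/-- `f` is a deflation: the second map of some conflation. -/
def IsDeflation (E : ExactStructure 𝒜) {Y Z : 𝒜} (d : Y ⟶ Z) : Prop :=
  ∃ (X : 𝒜) (i : X ⟶ Y), E.conflation i d

/-- `𝒜` is weakly idempotent complete: every split epimorphism is a deflation. -/
def IsWIC (E : ExactStructure 𝒜) : Prop :=
  ∀ {X Y : 𝒜} (d : X ⟶ Y) (s : Y ⟶ X), s ≫ d = 𝟙 Y → IsDeflation E d

/-- `Ext¹(A,B) = 0`: every conflation `B ⟶ M ⟶ A` splits. -/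
def Ext1IsZero (E : ExactStructure 𝒜) (A B : 𝒜) : Prop :=
  ∀ {M : 𝒜} (i : B ⟶ M) (d : M ⟶ A), E.conflation i d → ∃ r : M ⟶ B, i ≫ r = 𝟙 B

/-- `(X, Y)` is a cotorsion pair: each class is the `Ext¹`-orthogonal of the other. -/
def IsCotorsionPair (E : ExactStructure 𝒜) (X Y : Set 𝒜) : Prop :=
  (∀ A : 𝒜, A ∈ X ↔ ∀ B ∈ Y, Ext1IsZero E A B) ∧
  (∀ B : 𝒜, B ∈ Y ↔ ∀ A ∈ X, Ext1IsZero E A B)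

/-- Completeness of a cotorsion pair: every object has approximation sequences. -/
def IsCompleteCP (E : ExactStructure 𝒜) (X Y : Set 𝒜) : Prop :=
  ∀ A : 𝒜,
    (∃ (Y₀ X₀ : 𝒜) (i : Y₀ ⟶ X₀) (d : X₀ ⟶ A), E.conflation i d ∧ X₀ ∈ X ∧ Y₀ ∈ Y) ∧
    (∃ (Y₁ X₁ : 𝒜) (i : A ⟶ Y₁) (d : Y₁ ⟶ X₁), E.conflation i d ∧ X₁ ∈ X ∧ Y₁ ∈ Y)

/-- Heredity of a cotorsion pair: `X` is closed under kernels of deflations and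
`Y` is closed under cokernels of inflations. -/
def IsHereditaryCP (E : ExactStructure 𝒜) (X Y : Set 𝒜) : Prop :=
  (∀ {K A B : 𝒜} (i : K ⟶ A) (d : A ⟶ B), E.conflation i d → A ∈ X → B ∈ X → K ∈ X) ∧
  (∀ {K A B : 𝒜} (i : K ⟶ A) (d : A ⟶ B), E.conflation i d → K ∈ Y → A ∈ Y → B ∈ Y)

/-- `t : W ⟶ B` is a right `ω`-approximation of `B`. -/
def IsRightApprox (ω : Set 𝒜) {W B : 𝒜} (t : W ⟶ B) : Prop :=
  W ∈ ω ∧ ∀ (W' : 𝒜), W' ∈ ω → ∀ g : W' ⟶ B, ∃ h : W' ⟶ W, h ≫ t = g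

/-- `ω` is contravariantly finite: every object has a right `ω`-approximation. -/
def IsContravariantlyFinite (ω : Set 𝒜) : Prop :=
  ∀ B : 𝒜, ∃ (W : 𝒜) (t : W ⟶ B), IsRightApprox ω t

/-- A full additive subcategory closed under isomorphisms and direct summands,
viewed as a class of objects. -/
def AdditivelyClosed (S : Set 𝒜) : Prop :=
  (0 : 𝒜) ∈ S ∧ (∀ A B : 𝒜, A ∈ S → B ∈ S → (A ⊞ B) ∈ S) ∧
  (∀ {A B : 𝒜}, (A ≅ B) → A ∈ S → B ∈ S) ∧
  (∀ {A B : 𝒜} (i : A ⟶ B) (r : B ⟶ A), i ≫ r = 𝟙 A → B ∈ S → A ∈ S)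

/-- `CoFib_ω`: inflations with cokernel in `X`. -/
def CoFibO (E : ExactStructure 𝒜) (X : Set 𝒜) : MorphismProperty 𝒜 :=
  fun _ B f => ∃ (Z : 𝒜) (d : B ⟶ Z), E.conflation f d ∧ Z ∈ X

/-- `Fib_ω`: the `ω`-epic morphisms. -/
def FibO (ω : Set 𝒜) : MorphismProperty 𝒜 :=
  fun A B f => ∀ (W : 𝒜), W ∈ ω → ∀ g : W ⟶ B, ∃ h : W ⟶ A, h ≫ f = g

/-- `Weq_ω`: morphisms `f : A ⟶ B` such that for some `W ∈ ω` and `t : W ⟶ B`,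
`(f,t) : A ⊞ W ⟶ B` is a deflation with kernel in `Y`. -/
def WeqO (E : ExactStructure 𝒜) (ω Y : Set 𝒜) : MorphismProperty 𝒜 :=
  fun A B f => ∃ (W : 𝒜) (_ : W ∈ ω) (t : W ⟶ B) (K : 𝒜) (k : K ⟶ A ⊞ W),
    E.conflation k (biprod.desc f t) ∧ K ∈ Y

/-- `TCoFib_ω`: split monomorphisms with cokernel in `ω`. -/
def TCoFibO (E : ExactStructure 𝒜) (ω : Set 𝒜) : MorphismProperty 𝒜 :=
  fun A B f => (∃ r : B ⟶ A, f ≫ r = 𝟙 A) ∧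
    ∃ (Z : 𝒜) (d : B ⟶ Z), E.conflation f d ∧ Z ∈ ω

/-- `TFib_ω`: deflations with kernel in `Y`. -/
def TFibO (E : ExactStructure 𝒜) (Y : Set 𝒜) : MorphismProperty 𝒜 :=
  fun A _ f => ∃ (K : 𝒜) (k : K ⟶ A), E.conflation k f ∧ K ∈ Y

/-- `g` is a retract of `f`. -/
def IsRetractMor {A' B' A B : 𝒜} (g : A' ⟶ B') (f : A ⟶ B) : Prop :=
  ∃ (φ₁ : A' ⟶ A) (ψ₁ : A ⟶ A') (φ₂ : B' ⟶ B) (ψ₂ : B ⟶ B'),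
    φ₁ ≫ ψ₁ = 𝟙 A' ∧ φ₂ ≫ ψ₂ = 𝟙 B' ∧ φ₁ ≫ f = g ≫ φ₂ ∧ f ≫ ψ₂ = ψ₁ ≫ g

/-- A (closed, Quillen) model structure, given by classes of cofibrations,
fibrations and weak equivalences. -/
structure IsModelStructure (C F W : MorphismProperty 𝒜) : Prop where
  weq_comp : ∀ {X Y Z : 𝒜} (f : X ⟶ Y) (g : Y ⟶ Z), W f → W g → W (f ≫ g)
  weq_cancel_left : ∀ {X Y Z : 𝒜} (f : X ⟶ Y) (g : Y ⟶ Z), W f → W (f ≫ g) → W g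
  weq_cancel_right : ∀ {X Y Z : 𝒜} (f : X ⟶ Y) (g : Y ⟶ Z), W g → W (f ≫ g) → W f
  retract_cofib : ∀ {A' B' A B : 𝒜} (g : A' ⟶ B') (f : A ⟶ B),
    IsRetractMor g f → C f → C g
  retract_fib : ∀ {A' B' A B : 𝒜} (g : A' ⟶ B') (f : A ⟶ B),
    IsRetractMor g f → F f → F g
  retract_weq : ∀ {A' B' A B : 𝒜} (g : A' ⟶ B') (f : A ⟶ B),
    IsRetractMor g f → W f → W g
  lifting_left : ∀ {A B X Y : 𝒜} (i : A ⟶ B) (p : X ⟶ Y) (a : A ⟶ X) (b : B ⟶ Y),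
    C i → W i → F p → a ≫ p = i ≫ b → ∃ s : B ⟶ X, i ≫ s = a ∧ s ≫ p = b
  lifting_right : ∀ {A B X Y : 𝒜} (i : A ⟶ B) (p : X ⟶ Y) (a : A ⟶ X) (b : B ⟶ Y),
    C i → F p → W p → a ≫ p = i ≫ b → ∃ s : B ⟶ X, i ≫ s = a ∧ s ≫ p = b
  fact_left : ∀ {A B : 𝒜} (f : A ⟶ B), ∃ (Z : 𝒜) (i : A ⟶ Z) (p : Z ⟶ B),
    i ≫ p = f ∧ C i ∧ W i ∧ F p
  fact_right : ∀ {A B : 𝒜} (f : A ⟶ B), ∃ (Z : 𝒜) (j : A ⟶ Z) (q : Z ⟶ B),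
    j ≫ q = f ∧ C j ∧ F q ∧ W q

/-- An object is cofibrant if `0 ⟶ X` is a cofibration. -/
def Cofibrant (C : MorphismProperty 𝒜) (A : 𝒜) : Prop := C (0 : (0 : 𝒜) ⟶ A)

/-- An object is fibrant if `X ⟶ 0` is a fibration. -/
def Fibrant (F : MorphismProperty 𝒜) (A : 𝒜) : Prop := F (0 : A ⟶ (0 : 𝒜))

/-- An object is trivial if `0 ⟶ X` is a weak equivalence. -/
def TrivialObj (W : MorphismProperty 𝒜) (A : 𝒜) : Prop := W (0 : (0 : 𝒜) ⟶ A)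

/-- `P` is projective in the exact category. -/
def IsProjObj (E : ExactStructure 𝒜) (P : 𝒜) : Prop :=
  ∀ {A B : 𝒜} (d : A ⟶ B), IsDeflation E d → ∀ g : P ⟶ B, ∃ h : P ⟶ A, h ≫ d = g

/-- The exact category has enough projective objects. -/
def HasEnoughProj (E : ExactStructure 𝒜) : Prop :=
  ∀ X : 𝒜, ∃ (P : 𝒜) (d : P ⟶ X), IsProjObj E P ∧ IsDeflation E d

/-- Cofibrations are exactly the inflations with cofibrant cokernel. -/
def CofibsAreInflWithCofibCoker (E : ExactStructure 𝒜) (C : MorphismProperty 𝒜) : Prop :=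
  ∀ {A B : 𝒜} (f : A ⟶ B),
    C f ↔ ∃ (Z : 𝒜) (d : B ⟶ Z), E.conflation f d ∧ Cofibrant C Z

/-- Fibrations are exactly the deflations with fibrant kernel. -/
def FibsAreDeflWithFibKer (E : ExactStructure 𝒜) (F : MorphismProperty 𝒜) : Prop :=
  ∀ {A B : 𝒜} (f : A ⟶ B),
    F f ↔ ∃ (K : 𝒜) (k : K ⟶ A), E.conflation k f ∧ Fibrant F K

/-- Trivial fibrations are exactly the deflations with trivially fibrant kernel. -/
def TrivFibsAreDeflWithTrivFibKer (E : ExactStructure 𝒜)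
    (F W : MorphismProperty 𝒜) : Prop :=
  ∀ {A B : 𝒜} (f : A ⟶ B),
    (F f ∧ W f) ↔ ∃ (K : 𝒜) (k : K ⟶ A), E.conflation k f ∧ Fibrant F K ∧ TrivialObj W K

/-- Every cofibration is an inflation. -/
def CofibsAreInfl (E : ExactStructure 𝒜) (C : MorphismProperty 𝒜) : Prop :=
  ∀ {A B : 𝒜} (f : A ⟶ B), C f → IsInflation E f

/-- Every trivial fibration is a deflation. -/
def TrivFibsAreDefl (E : ExactStructure 𝒜) (F W : MorphismProperty 𝒜) : Prop :=
  ∀ {A B : 𝒜} (f : A ⟶ B), F f → W f → IsDeflation E f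

/-- An exact model structure in the sense of Gillespie. -/
def IsExactModelStr (E : ExactStructure 𝒜) (C F W : MorphismProperty 𝒜) : Prop :=
  IsModelStructure C F W ∧ CofibsAreInflWithCofibCoker E C ∧ FibsAreDeflWithFibKer E F

/-- A weakly projective model structure: every object is fibrant, cofibrations are
exactly the inflations with cofibrant cokernel, and trivial fibrations are exactly
the deflations with trivially fibrant kernel. -/
def IsWeaklyProjModelStr (E : ExactStructure 𝒜) (C F W : MorphismProperty 𝒜) : Prop :=
  IsModelStructure C F W ∧ (∀ A : 𝒜, Fibrant F A) ∧
    CofibsAreInflWithCofibCoker E C ∧ TrivFibsAreDeflWithTrivFibKer E F W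

/-- A projective model structure: an exact model structure with every object fibrant. -/
def IsProjectiveModelStr (E : ExactStructure 𝒜) (C F W : MorphismProperty 𝒜) : Prop :=
  IsExactModelStr E C F W ∧ (∀ A : 𝒜, Fibrant F A)

/-- A class of objects is thick: closed under direct summands and two-out-of-three
in conflations. -/
def IsThick (E : ExactStructure 𝒜) (S : Set 𝒜) : Prop :=
  (∀ {A B : 𝒜} (i : A ⟶ B) (r : B ⟶ A), i ≫ r = 𝟙 A → B ∈ S → A ∈ S) ∧
  (∀ {X Y Z : 𝒜} (i : X ⟶ Y) (d : Y ⟶ Z), E.conflation i d →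
    ((X ∈ S → Y ∈ S → Z ∈ S) ∧ (X ∈ S → Z ∈ S → Y ∈ S) ∧ (Y ∈ S → Z ∈ S → X ∈ S)))

/-!
Weak idempotent completeness turns an `ω`-epic weak equivalence into a deflation with kernel in `Y`.
Hence factoring `0 ⟶ A` and `A ⟶ 0` gives the two approximation sequences of `A`, while lifting
cofibrations against `B ⟶ 0` for `B ∈ Y` gives `Ext¹(X, Y) = 0`. `Y` is closed under cokernels of
inflations because weak equivalences compose.

That `X` is closed under kernels of deflations is then a property of any complete cotorsion pair
with this closure of `Y`. Given `K ⟶ A ⟶ B` with `A, B ∈ X` and `L ⟶ M ⟶ K` with `L ∈ Y`, embed `M`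
into some `N ∈ Y` and push out to `P = N ⊔_M K`, which is `N / L ∈ Y`. Now `K ⟶ P` extends to `A`,
then lifts to `N`, and the pushout square being a pullback turns `K ⟶ A ⟶ N` into a section of
`M ⟶ K`.
-/

namespace ExactStructure.conflation

variable {E : ExactStructure 𝒜} {A B C : 𝒜} {i : A ⟶ B} {d : B ⟶ C}

theorem mono (h : E.conflation i d) : Mono i := by
  obtain ⟨hi⟩ := E.isKernel h
  exact mono_of_isLimit_fork hi

theorem epi (h : E.conflation i d) : Epi d := by
  obtain ⟨hd⟩ := E.isCokernel h
  exact epi_of_isColimit_cofork hd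

theorem exists_lift (h : E.conflation i d) {T : 𝒜} (f : T ⟶ B) (hf : f ≫ d = 0) :
    ∃ l : T ⟶ A, l ≫ i = f := by
  obtain ⟨hi⟩ := E.isKernel h
  obtain ⟨l, hl⟩ := KernelFork.IsLimit.lift' hi f hf
  exact ⟨l, hl⟩

theorem exists_desc (h : E.conflation i d) {T : 𝒜} (f : B ⟶ T) (hf : i ≫ f = 0) :
    ∃ l : C ⟶ T, d ≫ l = f := by
  obtain ⟨hd⟩ := E.isCokernel h
  obtain ⟨l, hl⟩ := CokernelCofork.IsColimit.desc' hd f hf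
  exact ⟨l, hl⟩

theorem isPullback (h : E.conflation i d) :
    IsPullback i (0 : A ⟶ (0 : 𝒜)) d (0 : (0 : 𝒜) ⟶ C) := by
  have := h.mono
  refine IsPullback.mk' (by simp [E.comp_zero h])
    (fun _ _ _ hi _ ↦ (cancel_mono i).1 hi) fun T a b hab ↦ ?_
  obtain ⟨l, hl⟩ := h.exists_lift a (by simpa using hab)
  exact ⟨l, hl, by ext⟩

theorem isPushout (h : E.conflation i d) :
    IsPushout i (0 : A ⟶ (0 : 𝒜)) d (0 : (0 : 𝒜) ⟶ C) := by
  have := h.epi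
  refine IsPushout.mk' (by simp [E.comp_zero h])
    (fun _ _ _ hd _ ↦ (cancel_epi d).1 hd) fun T a b hab ↦ ?_
  obtain ⟨l, hl⟩ := h.exists_desc a (by simpa using hab)
  exact ⟨l, hl, by ext⟩

theorem of_isPullback_zero (h : E.conflation i d) {A' : 𝒜} {i' : A' ⟶ B}
    (hi' : IsPullback i' (0 : A' ⟶ (0 : 𝒜)) d (0 : (0 : 𝒜) ⟶ C)) : E.conflation i' d :=
  E.conflation_iso (h.isPullback.isoIsPullback _ _ hi') (Iso.refl B) (Iso.refl C) h
    (by simp) (by simp)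

theorem of_isPushout_zero (h : E.conflation i d) {C' : 𝒜} {d' : B ⟶ C'}
    (hd' : IsPushout i (0 : A ⟶ (0 : 𝒜)) d' (0 : (0 : 𝒜) ⟶ C')) : E.conflation i d' :=
  E.conflation_iso (Iso.refl A) (Iso.refl B) (h.isPushout.isoIsPushout _ _ hd') h
    (by simp) (by simp)

theorem exists_of_isPullback (h : E.conflation i d) {B' C' : 𝒜} {f : C' ⟶ C} {f' : B' ⟶ B}
    {d' : B' ⟶ C'} (hp : IsPullback f' d' d f) :
    ∃ i' : A ⟶ B', E.conflation i' d' ∧ i' ≫ f' = i := by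
  obtain ⟨B'', f'', d'', K, k, hp', hk⟩ := E.pullback_deflation h f
  let e := hp'.isoIsPullback _ _ hp
  have hk' : E.conflation (k ≫ e.hom) d' :=
    E.conflation_iso (Iso.refl K) e (Iso.refl C') hk (by simp) (by simp [e])
  have hker := IsPullback.of_right' (h₂₁ := (0 : (0 : 𝒜) ⟶ C')) (by simpa using h.isPullback) hp
  exact ⟨_, hk'.of_isPullback_zero hker, hp.lift_fst _ _ _⟩

theorem exists_of_isPushout (h : E.conflation i d) {A' B' : 𝒜} {f : A ⟶ A'} {f' : B ⟶ B'}
    {i' : A' ⟶ B'} (hp : IsPushout i f f' i') :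
    ∃ d' : B' ⟶ C, E.conflation i' d' ∧ f' ≫ d' = d := by
  obtain ⟨B'', f'', i'', Q, q, hp', hq⟩ := E.pushout_inflation h f
  let e := hp'.isoIsPushout _ _ hp
  have hq' : E.conflation i' (e.inv ≫ q) :=
    E.conflation_iso (Iso.refl A') e (Iso.refl Q) hq (by simp [e]) (by simp)
  have hcoker := IsPushout.of_top' (v₂₁ := (0 : A' ⟶ (0 : 𝒜))) (by simpa using h.isPushout) hp
  exact ⟨_, hq'.of_isPushout_zero hcoker, hp.inl_desc _ _ _⟩

theorem isPushout_of_isPullback (h : E.conflation i d) {B' C' : 𝒜} {f : C' ⟶ C} {f' : B' ⟶ B}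
    {d' : B' ⟶ C'} (hp : IsPullback f' d' d f) : IsPushout f' d' d f := by
  obtain ⟨i', hi', hi'f'⟩ := h.exists_of_isPullback hp
  have := h.epi
  have := hi'.epi
  refine IsPushout.mk' hp.w (fun _ _ _ hd _ ↦ (cancel_epi d).1 hd) fun T a b hab ↦ ?_
  obtain ⟨l, hl⟩ := h.exists_desc a (by
    rw [← hi'f', Category.assoc, hab, reassoc_of% (E.comp_zero hi'), zero_comp])
  refine ⟨l, hl, ?_⟩
  rw [← cancel_epi d', ← hab, ← hl, hp.w_assoc]

theorem isPullback_of_isPushout (h : E.conflation i d) {A' B' : 𝒜} {f : A ⟶ A'} {f' : B ⟶ B'}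
    {i' : A' ⟶ B'} (hp : IsPushout i f f' i') : IsPullback i f f' i' := by
  obtain ⟨d', hd', hf'd'⟩ := h.exists_of_isPushout hp
  have := h.mono
  have := hd'.mono
  refine IsPullback.mk' hp.w (fun _ _ _ hi _ ↦ (cancel_mono i).1 hi) fun T a b hab ↦ ?_
  obtain ⟨l, hl⟩ := h.exists_lift a (by
    rw [← hf'd', reassoc_of% hab, E.comp_zero hd', Limits.comp_zero])
  refine ⟨l, hl, ?_⟩
  rw [← cancel_mono i', ← hab, ← hl, Category.assoc, Category.assoc, hp.w]

theorem exists_retraction_iff_exists_section (h : E.conflation i d) :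
    (∃ r : B ⟶ A, i ≫ r = 𝟙 A) ↔ ∃ s : C ⟶ B, s ≫ d = 𝟙 C := by
  have := h.mono
  have := h.epi
  constructor
  · rintro ⟨r, hr⟩
    obtain ⟨s, hs⟩ := h.exists_desc (𝟙 B - r ≫ i) (by simp [reassoc_of% hr])
    exact ⟨s, by rw [← cancel_epi d, reassoc_of% hs]; simp [E.comp_zero h]⟩
  · rintro ⟨s, hs⟩
    obtain ⟨r, hr⟩ := h.exists_lift (𝟙 B - d ≫ s) (by simp [hs])
    exact ⟨r, by rw [← cancel_mono i, Category.assoc, hr]; simp [reassoc_of% (E.comp_zero h)]⟩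

theorem exists_retract_of_comp {A' B' : 𝒜} {g : B' ⟶ B} {i' : A' ⟶ B'} (h : E.conflation i d)
    (h' : E.conflation i' (g ≫ d)) {s : B ⟶ B'} (hs : s ≫ g = 𝟙 B) :
    ∃ (a : A ⟶ A') (r : A' ⟶ A), a ≫ r = 𝟙 A := by
  have := h.mono
  obtain ⟨a, ha⟩ := h'.exists_lift (i ≫ s) (by simp [reassoc_of% hs, E.comp_zero h])
  obtain ⟨r, hr⟩ := h.exists_lift (i' ≫ g) (by simpa using E.comp_zero h')
  exact ⟨a, r, by rw [← cancel_mono i, Category.assoc, hr, reassoc_of% ha, hs]; simp⟩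

theorem id_zero (E : ExactStructure 𝒜) (A : 𝒜) : E.conflation (𝟙 A) (0 : A ⟶ (0 : 𝒜)) := by
  obtain ⟨q, hq, -⟩ := (E.id_deflation (0 : 𝒜)).exists_of_isPushout (IsPushout.zero_top A)
  rwa [show q = 0 by ext] at hq

end ExactStructure.conflation

namespace IsDeflation

variable {E : ExactStructure 𝒜} {A B C D : 𝒜}

theorem comp {f : A ⟶ B} {g : B ⟶ C} (hf : IsDeflation E f) (hg : IsDeflation E g) :
    IsDeflation E (f ≫ g) := by
  obtain ⟨_, _, hf⟩ := hf
  obtain ⟨_, _, hg⟩ := hg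
  exact E.deflation_comp hf hg

theorem exists_isPullback {f : A ⟶ C} (hf : IsDeflation E f) (g : B ⟶ C) :
    ∃ (P : 𝒜) (g' : P ⟶ A) (f' : P ⟶ B), IsPullback g' f' f g ∧ IsDeflation E f' := by
  obtain ⟨_, _, hf⟩ := hf
  obtain ⟨P, g', f', K, k, hp, hk⟩ := E.pullback_deflation hf g
  exact ⟨P, g', f', hp, K, k, hk⟩

theorem of_comp (hwic : IsWIC E) {g : A ⟶ B} {f : B ⟶ C} (hgf : IsDeflation E (g ≫ f)) :
    IsDeflation E f := by
  obtain ⟨P, f', d, hp, hd⟩ := hgf.exists_isPullback f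
  -- `(𝟙, g)` splits the pullback `f'` of `f`, so `f'`, and hence `f`, has a kernel.
  obtain ⟨K, k, hk⟩ := hwic f' (hp.lift (𝟙 A) g (by simp)) (by simp)
  have hker : IsPullback (k ≫ d) (0 : K ⟶ (0 : 𝒜)) f (0 : (0 : 𝒜) ⟶ C) := by
    simpa using hk.isPullback.paste_horiz hp.flip
  have hdf : IsDeflation E (d ≫ f) := hp.w ▸ IsDeflation.comp ⟨K, k, hk⟩ hgf
  obtain ⟨M, m, hm⟩ := hdf
  obtain ⟨_, _, hd⟩ := hd
  have hpo := hd.isPushout_of_isPullback (IsPullback.of_bot' hm.isPullback hker)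
  have := hd.epi
  obtain ⟨q, hq, hdq⟩ := hm.exists_of_isPushout hpo
  exact ⟨K, k ≫ d, (cancel_epi d).1 hdq ▸ hq⟩

theorem of_isPushout (hwic : IsWIC E) {p : A ⟶ C} {e : A ⟶ B} {c : B ⟶ D} {k : C ⟶ D}
    (hp : IsDeflation E p) (he : IsInflation E e) (hpo : IsPushout e p c k) :
    IsDeflation E c := by
  obtain ⟨Q, d, he⟩ := he
  obtain ⟨x, hx, hcx⟩ := he.exists_of_isPushout hpo
  obtain ⟨P, x', d', hP, hd'⟩ := IsDeflation.exists_isPullback ⟨A, e, he⟩ x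
  obtain ⟨u, hu⟩ := hx.exists_lift (d' - x' ≫ c) (by simp [hcx, hP.w])
  obtain ⟨P', u', q, hP', hq⟩ := hp.exists_isPullback u
  have hfac : (q ≫ x' + u' ≫ e) ≫ c = q ≫ d' := by
    rw [Preadditive.add_comp, Category.assoc, Category.assoc, hpo.w, hP'.w_assoc, hu]
    simp
  exact of_comp hwic (hfac ▸ hq.comp hd')

end IsDeflation

theorem ExactStructure.conflation.comp_of_isPushout {E : ExactStructure 𝒜} (hwic : IsWIC E)
    {A B C B' C' : 𝒜} {i : A ⟶ B} {d : B ⟶ C} (h : E.conflation i d) {e : B ⟶ B'}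
    (he : IsInflation E e) {d' : B' ⟶ C'} {e' : C ⟶ C'} (hpo : IsPushout e d d' e') :
    E.conflation (i ≫ e) d' := by
  obtain ⟨K, k, hk⟩ := IsDeflation.of_isPushout hwic ⟨A, i, h⟩ he hpo
  obtain ⟨Q, q, he⟩ := he
  exact hk.of_isPullback_zero (by
    simpa using h.isPullback.paste_horiz (he.isPullback_of_isPushout hpo))

namespace Ext1IsZero

variable {E : ExactStructure 𝒜} {A B C T : 𝒜} {i : A ⟶ B} {d : B ⟶ C}

theorem exists_lift (hT : Ext1IsZero E T A) (h : E.conflation i d) (f : T ⟶ C) :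
    ∃ g : T ⟶ B, g ≫ d = f := by
  obtain ⟨B', f', d', -, -, hp, -⟩ := E.pullback_deflation h f
  obtain ⟨i', hi', -⟩ := h.exists_of_isPullback hp
  obtain ⟨s, hs⟩ := hi'.exists_retraction_iff_exists_section.1 (hT i' d' hi')
  exact ⟨s ≫ f', by rw [Category.assoc, hp.w, reassoc_of% hs]⟩

theorem exists_extension (hT : Ext1IsZero E C T) (h : E.conflation i d) (f : A ⟶ T) :
    ∃ g : B ⟶ T, i ≫ g = f := by
  obtain ⟨B', f', i', -, -, hp, -⟩ := E.pushout_inflation h f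
  obtain ⟨d', hd', -⟩ := h.exists_of_isPushout hp
  obtain ⟨r, hr⟩ := hT i' d' hd'
  exact ⟨f' ≫ r, by rw [hp.w_assoc, hr, Category.comp_id]⟩

end Ext1IsZero

namespace AdditivelyClosed

variable {S : Set 𝒜}

theorem zero_mem (hS : AdditivelyClosed S) : (0 : 𝒜) ∈ S := hS.1

theorem of_retract (hS : AdditivelyClosed S) {A B : 𝒜} {i : A ⟶ B} {r : B ⟶ A}
    (hir : i ≫ r = 𝟙 A) (hB : B ∈ S) : A ∈ S := hS.2.2.2 i r hir hB

end AdditivelyClosed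

section CotorsionPair

variable {E : ExactStructure 𝒜} {X Y : Set 𝒜}

theorem IsCompleteCP.isCotorsionPair (hX : AdditivelyClosed X) (hY : AdditivelyClosed Y)
    (hc : IsCompleteCP E X Y) (horth : ∀ A ∈ X, ∀ B ∈ Y, Ext1IsZero E A B) :
    IsCotorsionPair E X Y := by
  refine ⟨fun A ↦ ⟨horth A, fun hA ↦ ?_⟩, fun B ↦ ⟨fun hB A hA ↦ horth A hA B hB, fun hB ↦ ?_⟩⟩
  · obtain ⟨Y₀, X₀, i, d, h, hX₀, hY₀⟩ := (hc A).1
    obtain ⟨s, hs⟩ := h.exists_retraction_iff_exists_section.1 (hA Y₀ hY₀ i d h)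
    exact hX.of_retract hs hX₀
  · obtain ⟨Y₁, X₁, i, d, h, hX₁, hY₁⟩ := (hc B).2
    obtain ⟨r, hr⟩ := hB X₁ hX₁ i d h
    exact hY.of_retract hr hY₁

theorem IsCotorsionPair.isHereditaryCP (hcp : IsCotorsionPair E X Y) (hwic : IsWIC E)
    (hc : IsCompleteCP E X Y)
    (hcoker : ∀ {K A B : 𝒜} (i : K ⟶ A) (d : A ⟶ B), E.conflation i d → K ∈ Y → A ∈ Y → B ∈ Y) :
    IsHereditaryCP E X Y := by
  refine ⟨fun {K A B} i d h hA hB ↦ (hcp.1 K).2 fun L hL M y p hyp ↦ ?_, hcoker⟩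
  obtain ⟨N, Q, e, q, he, -, hN⟩ := (hc M).2
  obtain ⟨P, c, k, -, -, hpo, -⟩ := E.pushout_inflation he p
  have hyc : E.conflation (y ≫ e) c := hyp.comp_of_isPushout hwic ⟨Q, q, he⟩ hpo
  have hP : P ∈ Y := hcoker _ _ hyc hL hN
  obtain ⟨k', hk'⟩ := Ext1IsZero.exists_extension ((hcp.1 B).1 hB P hP) h k
  obtain ⟨g, hg⟩ := Ext1IsZero.exists_lift ((hcp.1 A).1 hA L hL) hyc k'
  have hpb := he.isPullback_of_isPushout hpo
  exact hyp.exists_retraction_iff_exists_section.2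
    ⟨hpb.lift (i ≫ g) (𝟙 K) (by simp [hg, hk']), hpb.lift_snd _ _ _⟩

end CotorsionPair

namespace IsModelStructure

omit [HasBinaryBiproducts 𝒜]

variable {C F W : MorphismProperty 𝒜}

theorem weq_id_zero (h : IsModelStructure C F W) : W (𝟙 (0 : 𝒜)) := by
  obtain ⟨Z, i, -, -, -, hi, -⟩ := h.fact_left (𝟙 (0 : 𝒜))
  exact h.retract_weq _ i ⟨0, 0, 0, 0, by ext, by ext, by ext, by ext⟩ hi

theorem trivialObj_iff (h : IsModelStructure C F W) {A : 𝒜} :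
    TrivialObj W A ↔ W (0 : A ⟶ (0 : 𝒜)) := by
  have hW : W ((0 : (0 : 𝒜) ⟶ A) ≫ (0 : A ⟶ (0 : 𝒜))) := by
    convert h.weq_id_zero using 1
    ext
  exact ⟨fun hA ↦ h.weq_cancel_left _ _ hA hW, fun hA ↦ h.weq_cancel_right _ _ hA hW⟩

theorem exists_extension (h : IsModelStructure C F W) {A B T : 𝒜} {i : A ⟶ B} (hi : C i)
    (hF : Fibrant F T) (hW : TrivialObj W T) (f : A ⟶ T) : ∃ g : B ⟶ T, i ≫ g = f := by
  obtain ⟨g, hg, -⟩ := h.lifting_right i (0 : T ⟶ (0 : 𝒜)) f 0 hi hF (h.trivialObj_iff.1 hW)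
    (by simp)
  exact ⟨g, hg⟩

end IsModelStructure

section OmegaClasses

variable {E : ExactStructure 𝒜} {X Y ω : Set 𝒜} {A B : 𝒜}

omit [HasBinaryBiproducts 𝒜] in
theorem fibrant_fibO (ω : Set 𝒜) (A : 𝒜) : Fibrant (FibO ω) A :=
  fun _ _ _ ↦ ⟨0, by ext⟩

theorem cofibrant_coFibO_iff (hX : AdditivelyClosed X) :
    Cofibrant (CoFibO E X) A ↔ A ∈ X := by
  constructor
  · rintro ⟨Z, d, hd, hZ⟩
    obtain ⟨r, hr⟩ := hd.exists_desc (𝟙 A) (by simp)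
    exact hX.of_retract hr hZ
  · exact fun hA ↦ ⟨A, 𝟙 A, E.id_deflation A, hA⟩

theorem TFibO.weqO (hω : (0 : 𝒜) ∈ ω) {f : A ⟶ B} (hf : TFibO E Y f) : WeqO E ω Y f := by
  obtain ⟨K, k, hk, hK⟩ := hf
  refine ⟨0, hω, 0, K, k ≫ biprod.inl, ?_, hK⟩
  exact E.conflation_iso (Iso.refl K) (isoBiprodZero (isZero_zero 𝒜)) (Iso.refl B) hk
    (by simp) (by simp)

theorem FibO.tFibO (hwic : IsWIC E) (hY : AdditivelyClosed Y) {f : A ⟶ B} (hf : FibO ω f)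
    (hf' : WeqO E ω Y f) : TFibO E Y f := by
  obtain ⟨W, hW, t, K, k, hk, hK⟩ := hf'
  obtain ⟨s, rfl⟩ := hf W hW t
  have hs : biprod.desc f (s ≫ f) = biprod.desc (𝟙 A) s ≫ f := by ext <;> simp
  rw [hs] at hk
  obtain ⟨L, l, hl⟩ := IsDeflation.of_comp hwic ⟨K, k, hk⟩
  obtain ⟨a, r, har⟩ := hl.exists_retract_of_comp hk (biprod.inl_desc (𝟙 A) s)
  exact ⟨L, l, hl, hY.of_retract har hK⟩

theorem weqO_to_zero_iff (hY : AdditivelyClosed Y) (hω : (0 : 𝒜) ∈ ω) :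
    WeqO E ω Y (0 : A ⟶ (0 : 𝒜)) ↔ A ∈ Y := by
  constructor
  · rintro ⟨W, -, t, K, k, hk, hK⟩
    obtain ⟨l, hl⟩ := hk.exists_lift (biprod.inl : A ⟶ A ⊞ W) (by ext)
    have hl' : l ≫ k ≫ biprod.fst = 𝟙 A := by rw [reassoc_of% hl, biprod.inl_fst]
    exact hY.of_retract hl' hK
  · exact fun hA ↦ TFibO.weqO hω ⟨A, 𝟙 A, .id_zero E A, hA⟩

end OmegaClasses

namespace IsModelStructure

variable {E : ExactStructure 𝒜} {X Y ω : Set 𝒜}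

theorem trivialObj_weqO_iff (hms : IsModelStructure (CoFibO E X) (FibO ω) (WeqO E ω Y))
    (hY : AdditivelyClosed Y) (hω : (0 : 𝒜) ∈ ω) {A : 𝒜} : TrivialObj (WeqO E ω Y) A ↔ A ∈ Y :=
  hms.trivialObj_iff.trans (weqO_to_zero_iff hY hω)

theorem ext1IsZero (hms : IsModelStructure (CoFibO E X) (FibO ω) (WeqO E ω Y))
    (hY : AdditivelyClosed Y) (hω : (0 : 𝒜) ∈ ω) {A B : 𝒜} (hA : A ∈ X) (hB : B ∈ Y) :
    Ext1IsZero E A B := fun _ d h ↦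
  hms.exists_extension ⟨A, d, h, hA⟩ (fibrant_fibO ω B) ((hms.trivialObj_weqO_iff hY hω).2 hB) (𝟙 B)

theorem isCompleteCP (hms : IsModelStructure (CoFibO E X) (FibO ω) (WeqO E ω Y))
    (hwic : IsWIC E) (hX : AdditivelyClosed X) (hY : AdditivelyClosed Y) (hω : (0 : 𝒜) ∈ ω) :
    IsCompleteCP E X Y := by
  refine fun A ↦ ⟨?_, ?_⟩
  · obtain ⟨Z, j, q, -, hj, hq, hq'⟩ := hms.fact_right (0 : (0 : 𝒜) ⟶ A)
    obtain ⟨K, k, hk, hK⟩ := hq.tFibO hwic hY hq'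
    obtain rfl : j = 0 := by ext
    exact ⟨K, Z, k, q, hk, (cofibrant_coFibO_iff hX).1 hj, hK⟩
  · obtain ⟨Z, j, q, -, ⟨Q, d, hd, hQ⟩, -, hq⟩ := hms.fact_right (0 : A ⟶ (0 : 𝒜))
    obtain rfl : q = 0 := by ext
    exact ⟨Z, Q, j, d, hd, hQ, (weqO_to_zero_iff hY hω).1 hq⟩

theorem cokernel_mem (hms : IsModelStructure (CoFibO E X) (FibO ω) (WeqO E ω Y))
    (hY : AdditivelyClosed Y) (hω : (0 : 𝒜) ∈ ω) {K A B : 𝒜} {i : K ⟶ A} {d : A ⟶ B}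
    (h : E.conflation i d) (hK : K ∈ Y) (hA : A ∈ Y) : B ∈ Y := by
  have hB := hms.weq_comp _ _ ((hms.trivialObj_weqO_iff hY hω).2 hA) (TFibO.weqO hω ⟨K, i, h, hK⟩)
  rw [zero_comp] at hB
  exact (hms.trivialObj_weqO_iff hY hω).1 hB

theorem isContravariantlyFinite
    (hms : IsModelStructure (CoFibO E X) (FibO (X ∩ Y)) (WeqO E (X ∩ Y) Y))
    (hX : AdditivelyClosed X) (hY : AdditivelyClosed Y) : IsContravariantlyFinite (X ∩ Y) := by
  intro B
  obtain ⟨Z, i, p, -, hi, hi', hp⟩ := hms.fact_left (0 : (0 : 𝒜) ⟶ B)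
  obtain rfl : i = 0 := by ext
  exact ⟨Z, p, ⟨(cofibrant_coFibO_iff hX).1 hi,
    (hms.trivialObj_weqO_iff hY ⟨hX.zero_mem, hY.zero_mem⟩).1 hi'⟩, hp⟩

end IsModelStructure

/-- The "only if" part of the main theorem. -/
theorem stmt_1 (E : ExactStructure 𝒜) (hwic : IsWIC E) (X Y : Set 𝒜)
    (hX : AdditivelyClosed X) (hY : AdditivelyClosed Y)
    (hms : IsModelStructure (CoFibO E X) (FibO (X ∩ Y)) (WeqO E (X ∩ Y) Y)) :
    IsCotorsionPair E X Y ∧ IsCompleteCP E X Y ∧ IsHereditaryCP E X Y ∧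
    IsContravariantlyFinite (X ∩ Y) ∧
    (∀ A : 𝒜, Cofibrant (CoFibO E X) A ↔ A ∈ X) ∧
    (∀ A : 𝒜, Fibrant (FibO (X ∩ Y)) A) ∧
    (∀ A : 𝒜, TrivialObj (WeqO E (X ∩ Y) Y) A ↔ A ∈ Y) := by
  have hω : (0 : 𝒜) ∈ X ∩ Y := ⟨hX.zero_mem, hY.zero_mem⟩
  have hcomplete := hms.isCompleteCP hwic hX hY hω
  have hcotorsion := hcomplete.isCotorsionPair hX hY
    fun _ hA _ hB ↦ hms.ext1IsZero hY hω hA hB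
  have hhereditary := hcotorsion.isHereditaryCP hwic hcomplete
    fun _ _ h ↦ hms.cokernel_mem hY hω h
  exact ⟨hcotorsion, hcomplete, hhereditary, hms.isContravariantlyFinite hX hY,
    fun _ ↦ cofibrant_coFibO_iff hX, fibrant_fibO (X ∩ Y),
    fun _ ↦ hms.trivialObj_weqO_iff hY hω⟩
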